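/- arXiv:2002.05119 — 2 statements merged into one kernel-verified Lean document; each statement's English description precedes it below -/
import Mathlib

section
/- Let X be a partial allocation and g an unallocated good. Suppose agent i champions agent j with v_i(X_i) ≥ v_i(X_j), agent i' champions agent k with v_{i'}(X_{i'}) ≥ v_{i'}(X_k), and agent i does not champion agent k (all championships with respect to the same unallocated good g), with G_{ij} and G_{i'k} the corresponding maximum-cardinality subsets. Then v_i(X_j ∖ G_{ij}) > v_i(X_k ∖ G_{i'k}). -/
open Finset

/-- Additive value of a bundle `S` under per-good valuation `v`. -/
noncomputable def val {G : Type*} (v : G → ℝ) (S : Finset G) : ℝ := ∑ g ∈ S, v g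

/-- `X` is EFX: no agent `i` strongly envies agent `j`, i.e. for every good `g`
in `X j`, `v_i(X_i) ≥ v_i(X_j \ {g})`. -/
def EFX {G : Type*} [DecidableEq G] (v : Fin 3 → G → ℝ) (X : Fin 3 → Finset G) : Prop :=
  ∀ i j : Fin 3, ∀ g ∈ X j, val (v i) (X j \ {g}) ≤ val (v i) (X i)

/-- `κ_X(i,S)`: the minimum cardinality of a subset `S' ⊆ S` with `v_i(S') > v_i(X_i)`. -/
noncomputable def kappa {G : Type*} (v : G → ℝ) (Xi S : Finset G) : ℕ :=
  sInf {n : ℕ | ∃ S' ⊆ S, S'.card = n ∧ val v Xi < val v S'}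

/-- Agent `i` is a most envious agent for the bundle `S` under allocation `X`. -/
def MostEnvious {G : Type*} (v : Fin 3 → G → ℝ) (X : Fin 3 → Finset G)
    (i : Fin 3) (S : Finset G) : Prop :=
  val (v i) (X i) < val (v i) S ∧
    ∀ k : Fin 3, val (v k) (X k) < val (v k) S →
      kappa (v i) (X i) S ≤ kappa (v k) (X k) S

/-! Write `S = X_k ∪ {g}`. As `G_{i'k}` has maximum cardinality, `S ∖ G_{i'k}` has exactly
`κ_X(i', S)` goods. If `i` preferred it to `X_i`, then `κ_X(i, S) ≤ κ_X(i', S)`, so `i`, like `i'`,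
would be a most envious agent for `S`. Hence
`v_i(S ∖ G_{i'k}) ≤ v_i(X_i) < v_i((X_j ∪ {g}) ∖ G_{ij})`. Since `i'` does not envy `X_k`, the good
`g` contributes its full value to the left-hand side; it contributes at most that much to the
right-hand side, so `v_i(g)` cancels. -/

section Bundle

variable {G : Type*} {v : G → ℝ} {S T Y : Finset G}

theorem val_mono (hv : ∀ a ∈ T, 0 ≤ v a) (hST : S ⊆ T) : val v S ≤ val v T :=
  sum_le_sum_of_subset_of_nonneg hST fun a ha _ => hv a ha

theorem kappa_le_card (hTS : T ⊆ S) (hT : val v Y < val v T) : kappa v Y S ≤ #T :=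
  Nat.sInf_le ⟨T, hTS, rfl, hT⟩

variable [DecidableEq G] {D : Finset G} {g : G}

theorem kappa_eq_card_sdiff (hDS : D ⊆ S) (hD : val v Y < val v (S \ D))
    (hmax : ∀ D' ⊆ S, val v Y < val v (S \ D') → #D' ≤ #D) :
    kappa v Y S = #(S \ D) := by
  refine le_antisymm (kappa_le_card sdiff_subset hD) (le_csInf ⟨_, S \ D, sdiff_subset, rfl, hD⟩ ?_)
  rintro _ ⟨T, hTS, rfl, hT⟩
  have hcard : #(S \ T) ≤ #D := hmax (S \ T) sdiff_subset (by rwa [Finset.sdiff_sdiff_eq_self hTS])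
  have hT_add := card_sdiff_add_card_eq_card hTS
  have hD_add := card_sdiff_add_card_eq_card hDS
  lia

theorem union_singleton_sdiff_of_mem (hg : g ∈ S ∪ D) : (S ∪ {g}) \ D = S \ D := by
  grind

theorem val_union_singleton_sdiff_of_notMem (hg : g ∉ S ∪ D) :
    val v ((S ∪ {g}) \ D) = val v (S \ D) + v g := by
  have hinsert : (S ∪ {g}) \ D = insert g (S \ D) := by grind
  have hgS : g ∉ S \ D := by grind
  rw [hinsert, add_comm]
  exact sum_insert hgS

theorem val_union_singleton_sdiff_le (hg : 0 ≤ v g) :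
    val v ((S ∪ {g}) \ D) ≤ val v (S \ D) + v g := by
  by_cases hmem : g ∈ S ∪ D
  · rw [union_singleton_sdiff_of_mem hmem]
    exact le_add_of_nonneg_right hg
  · exact (val_union_singleton_sdiff_of_notMem hmem).le

theorem notMem_union_of_val_lt_val_union_singleton_sdiff (hv : ∀ a ∈ S, 0 ≤ v a)
    (hlt : val v S < val v ((S ∪ {g}) \ D)) : g ∉ S ∪ D := by
  intro hmem
  rw [union_singleton_sdiff_of_mem hmem] at hlt
  exact hlt.not_ge (val_mono hv sdiff_subset)

end Bundle

theorem MostEnvious.kappa_lt_kappa {G : Type*} {v : Fin 3 → G → ℝ} {X : Fin 3 → Finset G}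
    {i i' : Fin 3} {S : Finset G} (hi' : MostEnvious v X i' S) (hi : ¬ MostEnvious v X i S)
    (henvy : val (v i) (X i) < val (v i) S) :
    kappa (v i') (X i') S < kappa (v i) (X i) S := by
  by_contra! hle
  exact hi ⟨henvy, fun l hl => hle.trans (hi'.2 l hl)⟩

/-- Stated for valuations and bundles instead of an allocation, so as to cover any number of
agents. -/
theorem upper_half_comparison_general {G : Type*} [DecidableEq G] {vi vi' : G → ℝ}
    {Xi Xi' Xj Xk Gij Gik : Finset G} {g : G}
    (hvi : ∀ a ∈ Xk ∪ {g}, 0 ≤ vi a) (hvi' : ∀ a ∈ Xk, 0 ≤ vi' a)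
    (hnoenvy' : val vi' Xk ≤ val vi' Xi')
    (hkappa : val vi Xi < val vi (Xk ∪ {g}) → kappa vi' Xi' (Xk ∪ {g}) < kappa vi Xi (Xk ∪ {g}))
    (hGval : val vi Xi < val vi ((Xj ∪ {g}) \ Gij))
    (hGval' : val vi' Xi' < val vi' ((Xk ∪ {g}) \ Gik))
    (hGcard' : #((Xk ∪ {g}) \ Gik) ≤ kappa vi' Xi' (Xk ∪ {g})) :
    val vi (Xk \ Gik) < val vi (Xj \ Gij) := by
  have hle : val vi ((Xk ∪ {g}) \ Gik) ≤ val vi Xi := by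
    by_contra! hlt
    have hlt_kappa := hkappa (hlt.trans_le (val_mono hvi sdiff_subset))
    exact hlt_kappa.not_ge ((kappa_le_card sdiff_subset hlt).trans hGcard')
  have hg : g ∉ Xk ∪ Gik :=
    notMem_union_of_val_lt_val_union_singleton_sdiff hvi' (hnoenvy'.trans_lt hGval')
  have hvg : 0 ≤ vi g := hvi g (mem_union_right _ (mem_singleton_self g))
  refine lt_of_add_lt_add_right (a := vi g) ?_
  calc val vi (Xk \ Gik) + vi g
    _ = val vi ((Xk ∪ {g}) \ Gik) := (val_union_singleton_sdiff_of_notMem hg).symm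
    _ ≤ val vi Xi := hle
    _ < val vi ((Xj ∪ {g}) \ Gij) := hGval
    _ ≤ val vi (Xj \ Gij) + vi g := val_union_singleton_sdiff_le hvg

/-- Observation 8: if `i` champions `j` (without envying `j`), `i'` champions `k`
(without envying `k`), and `i` does not champion `k`, then `i` prefers the upper half
`X_j \ G_ij` to the upper half `X_k \ G_i'k`. -/
theorem upper_half_comparison {G : Type*} [DecidableEq G] (M : Finset G)
    (v : Fin 3 → G → ℝ) (hv : ∀ i : Fin 3, ∀ g ∈ M, 0 ≤ v i g)
    (X : Fin 3 → Finset G) (hXM : ∀ i, X i ⊆ M)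
    (hdisj : ∀ i j, i ≠ j → Disjoint (X i) (X j))
    (g : G) (hg : g ∈ M) (hun : g ∉ X 0 ∪ X 1 ∪ X 2)
    (i j i' k : Fin 3)
    (hch : MostEnvious v X i (X j ∪ {g}))
    (hnoenvy : val (v i) (X j) ≤ val (v i) (X i))
    (hch' : MostEnvious v X i' (X k ∪ {g}))
    (hnoenvy' : val (v i') (X k) ≤ val (v i') (X i'))
    (hnotch : ¬ MostEnvious v X i (X k ∪ {g}))
    (Gij : Finset G) (hGsub : Gij ⊆ X j ∪ {g})
    (hGval : val (v i) (X i) < val (v i) ((X j ∪ {g}) \ Gij))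
    (hGmax : ∀ G' ⊆ X j ∪ {g},
      val (v i) (X i) < val (v i) ((X j ∪ {g}) \ G') → G'.card ≤ Gij.card)
    (Gik : Finset G) (hGsub' : Gik ⊆ X k ∪ {g})
    (hGval' : val (v i') (X i') < val (v i') ((X k ∪ {g}) \ Gik))
    (hGmax' : ∀ G' ⊆ X k ∪ {g},
      val (v i') (X i') < val (v i') ((X k ∪ {g}) \ G') → G'.card ≤ Gik.card) :
    val (v i) (X k \ Gik) < val (v i) (X j \ Gij) := by
  have hM : X k ∪ {g} ⊆ M := union_subset (hXM k) (singleton_subset_iff.mpr hg)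
  exact upper_half_comparison_general (fun a ha => hv i a (hM ha)) (fun a ha => hv i' a (hXM k ha))
    hnoenvy' (hch'.kappa_lt_kappa hnotch) hGval hGval'
    (kappa_eq_card_sdiff hGsub' hGval' hGmax').ge
end

section
/- Let X be a partial EFX allocation in a non-degenerate instance and g an unallocated good. Suppose agents 1 and 2 champion each other (1 is a most envious agent for X_2 ∪ {g} and 2 is a most envious agent for X_1 ∪ {g}), neither agent 1 nor agent 2 is a most envious agent for his own bundle plus g, agent 1 does not envy agent 2, agent 2 does not envy agent 1, and agent 3 envies neither agent 1 nor agent 2. Then there exists a partial EFX allocation Y with Y_1 ∪ Y_2 ∪ Y_3 ⊆ X_1 ∪ X_2 ∪ X_3 ∪ {g} that Pareto dominates X. -/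
open Finset

/-!
Write `B₁` for a part of `X 1` of minimum size such that agent `0` prefers `B₁ ∪ {g}` to `X 0`, and
`B₀` for a part of `X 0` of minimum size such that agent `1` prefers `B₀ ∪ {g}` to `X 1`. Since
neither of the two is a most envious agent for his own bundle plus `g`, agent `0` values `B₁` above
`B₀` and agent `1` values `B₀` above `B₁`. So agent `0` gains by taking `B₁ ∪ {g}`, and agent `1`
gains by replacing `B₁` with `B₀` in his bundle. By the choice of `B₁` nobody strongly envies
`B₁ ∪ {g}`, and only agent `2` might envy `B₀ ∪ X 1 \ B₁`. If he does, the mirror image of this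
exchange works: `B₀ ∪ X 1 \ B₁` and `B₁ ∪ X 0 \ B₀` together hold the goods of `X 0` and `X 1`, so
agent `2` cannot prefer both of them to `X 2`.
-/

section Value

variable {G : Type*} {v : G → ℝ} {g : G} {A B S T : Finset G}

theorem val_le_val_of_subset (hST : S ⊆ T) (hv : ∀ x ∈ T, 0 ≤ v x) : val v S ≤ val v T :=
  sum_le_sum_of_subset_of_nonneg hST fun x hx _ => hv x hx

theorem val_insert_lt_val_insert [DecidableEq G] (hS : g ∉ S) (hT : g ∉ T) :
    val v (insert g S) < val v (insert g T) ↔ val v S < val v T := by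
  simp only [_root_.val, sum_insert hS, sum_insert hT, add_lt_add_iff_left]

theorem val_union_sdiff [DecidableEq G] (hT : T ⊆ B) (hSB : Disjoint S B) :
    val v (S ∪ B \ T) = val v S + val v B - val v T := by
  have hunion : val v (S ∪ B \ T) = val v S + val v (B \ T) :=
    sum_union (hSB.mono_right sdiff_subset)
  have hsdiff : val v (B \ T) + val v T = val v B := sum_sdiff hT
  linarith

theorem val_union_sdiff_add_val_union_sdiff [DecidableEq G] (hS : S ⊆ A) (hT : T ⊆ B)
    (hAB : Disjoint A B) : val v (S ∪ B \ T) + val v (T ∪ A \ S) = val v A + val v B := by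
  rw [val_union_sdiff hT (hAB.mono_left hS), val_union_sdiff hS (hAB.symm.mono_left hT)]
  ring

theorem mem_of_val_lt_of_subset_insert [DecidableEq G] (hv : ∀ x ∈ B, 0 ≤ v x)
    (hS : S ⊆ insert g B) (h : val v B < val v S) : g ∈ S := by
  by_contra hgS
  exact h.not_ge (val_le_val_of_subset ((subset_insert_iff_of_notMem hgS).1 hS) hv)

theorem kappa_le_card_s12 (hS : S ⊆ B) (h : val v A < val v S) : kappa v A B ≤ S.card :=
  Nat.sInf_le ⟨S, hS, rfl, h⟩

theorem exists_subset_card_eq_kappa (h : val v A < val v B) :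
    ∃ S ⊆ B, S.card = kappa v A B ∧ val v A < val v S :=
  Nat.sInf_mem (s := {n | ∃ S ⊆ B, S.card = n ∧ val v A < val v S}) ⟨B.card, B, Subset.rfl, rfl, h⟩

end Value

section Envy

variable {ι G : Type*} {v : ι → G → ℝ} {X Y : ι → Finset G} {S : Finset G}

/-- `Y` Pareto dominates `X`: every agent is at least as well off in `Y`, and some agent is
better off. -/
def ParetoDominates (v : ι → G → ℝ) (Y X : ι → Finset G) : Prop :=
  (∀ l, val (v l) (X l) ≤ val (v l) (Y l)) ∧ ∃ l, val (v l) (X l) < val (v l) (Y l)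

/-- The bundle `S` is not strongly envied under `X`: after the removal of any one of its goods, no
agent prefers it to his own bundle. The bundle need not belong to anybody, so that the notion
applies to a bundle that is about to be handed out. -/
def NotStronglyEnvied [DecidableEq G] (v : ι → G → ℝ) (X : ι → Finset G) (S : Finset G) : Prop :=
  ∀ l, ∀ x ∈ S, val (v l) (S \ {x}) ≤ val (v l) (X l)

theorem efx_iff_forall_notStronglyEnvied [DecidableEq G] {v : Fin 3 → G → ℝ}
    {X : Fin 3 → Finset G} : EFX v X ↔ ∀ m, NotStronglyEnvied v X (X m) :=
  forall_comm

theorem NotStronglyEnvied.mono [DecidableEq G] (h : NotStronglyEnvied v X S)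
    (hXY : ∀ l, val (v l) (X l) ≤ val (v l) (Y l)) : NotStronglyEnvied v Y S :=
  fun l x hx => (h l x hx).trans (hXY l)

theorem notStronglyEnvied_of_forall_val_le [DecidableEq G] (hv : ∀ l, ∀ x ∈ S, 0 ≤ v l x)
    (h : ∀ l, val (v l) S ≤ val (v l) (X l)) : NotStronglyEnvied v X S :=
  fun l _ _ => (val_le_val_of_subset sdiff_subset (hv l)).trans (h l)

end Envy

namespace MostEnvious

variable {G : Type*} {v : Fin 3 → G → ℝ} {X : Fin 3 → Finset G} {i k : Fin 3} {B S : Finset G}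

theorem kappa_le_card_of_val_lt (h : MostEnvious v X i B) (hB : ∀ x ∈ B, 0 ≤ v k x) (hS : S ⊆ B)
    (hkS : val (v k) (X k) < val (v k) S) : kappa (v i) (X i) B ≤ S.card :=
  (h.2 k (hkS.trans_le (val_le_val_of_subset hS hB))).trans (kappa_le_card_s12 hS hkS)

theorem of_card_le_kappa (h : MostEnvious v X i B) (hB : ∀ x ∈ B, 0 ≤ v k x) (hS : S ⊆ B)
    (hcard : S.card ≤ kappa (v i) (X i) B) (hkS : val (v k) (X k) < val (v k) S) :
    MostEnvious v X k B :=
  ⟨hkS.trans_le (val_le_val_of_subset hS hB), fun l hl =>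
    (kappa_le_card_s12 hS hkS).trans (hcard.trans (h.2 l hl))⟩

theorem notStronglyEnvied_of_card_le_kappa [DecidableEq G] (h : MostEnvious v X i B)
    (hB : ∀ l, ∀ x ∈ B, 0 ≤ v l x) (hS : S ⊆ B) (hcard : S.card ≤ kappa (v i) (X i) B) :
    NotStronglyEnvied v X S := by
  intro l x hx
  by_contra! hlt
  have hle : S.card ≤ (S \ {x}).card :=
    hcard.trans (h.kappa_le_card_of_val_lt (hB l) (sdiff_subset.trans hS) hlt)
  exact hle.not_gt (card_lt_card (sdiff_ssubset (singleton_subset_iff.2 hx) (singleton_nonempty x)))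

theorem exists_insert_notStronglyEnvied [DecidableEq G] {g : G} (h : MostEnvious v X i (B ∪ {g}))
    (hv : ∀ l, ∀ x ∈ B ∪ {g}, 0 ≤ v l x) (hiB : val (v i) B ≤ val (v i) (X i)) :
    ∃ S ⊆ B, val (v i) (X i) < val (v i) (insert g S) ∧ NotStronglyEnvied v X (insert g S) ∧
      ∀ k, ¬ MostEnvious v X k (B ∪ {g}) → val (v k) (insert g S) ≤ val (v k) (X k) := by
  obtain ⟨S, hSB, hcard, hiS⟩ := exists_subset_card_eq_kappa h.1
  have hSins : S ⊆ insert g B := by rwa [union_singleton] at hSB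
  have hgS : g ∈ S := mem_of_val_lt_of_subset_insert (fun x hx => hv i x (mem_union_left _ hx))
    hSins (hiB.trans_lt hiS)
  refine ⟨S.erase g, subset_insert_iff.1 hSins, ?_⟩
  rw [insert_erase hgS]
  refine ⟨hiS, h.notStronglyEnvied_of_card_le_kappa hv hSB hcard.le, fun k hk => ?_⟩
  by_contra! hkS
  exact hk (h.of_card_le_kappa (hv k) hSB hcard.le hkS)

end MostEnvious

section Exchange

variable {ι G : Type*} [DecidableEq ι] [DecidableEq G] {v : ι → G → ℝ} {X : ι → Finset G}
  {g : G} {i j : ι} {S T U : Finset G}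

/-- The allocation obtained from `X` when agent `j` hands over the part `T` of his bundle to
agent `i` in exchange for the part `S` of agent `i`'s bundle, and agent `i` gives up what is left
of his bundle for the good `g`. -/
def exchange (X : ι → Finset G) (g : G) (i j : ι) (S T : Finset G) (l : ι) : Finset G :=
  if l = i then insert g T else if l = j then S ∪ X j \ T else X l

theorem exchange_left : exchange X g i j S T i = insert g T :=
  if_pos rfl

theorem exchange_right (hij : i ≠ j) : exchange X g i j S T j = S ∪ X j \ T :=
  (if_neg hij.symm).trans (if_pos rfl)

theorem exchange_cases {p : ι → Finset G → Prop} (hi : p i (insert g T)) (hj : p j (S ∪ X j \ T))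
    (h : ∀ l, l ≠ i → l ≠ j → p l (X l)) (l : ι) : p l (exchange X g i j S T l) := by
  grind [exchange]

theorem exchange_subset (hXU : ∀ l, X l ⊆ U) (hg : g ∈ U) (hS : S ⊆ X i) (hT : T ⊆ X j) (l : ι) :
    exchange X g i j S T l ⊆ U := by
  grind [exchange]

theorem pairwise_disjoint_exchange (hX : Pairwise (Function.onFun Disjoint X))
    (hg : ∀ l, g ∉ X l) (hS : S ⊆ X i) (hT : T ⊆ X j) :
    Pairwise (Function.onFun Disjoint (exchange X g i j S T)) := by
  intro l m hlm
  have hX' : ∀ a b x, a ≠ b → x ∈ X a → x ∉ X b := fun a b x hab => (disjoint_left.1 (hX hab) ·)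
  simp only [Function.onFun, disjoint_left]
  grind [exchange]

theorem paretoDominates_exchange (hSj : Disjoint S (X j)) (hT : T ⊆ X j)
    (hi : val (v i) (X i) < val (v i) (insert g T)) (hj : val (v j) T ≤ val (v j) S) :
    ParetoDominates v (exchange X g i j S T) X := by
  refine ⟨exchange_cases (p := fun l Y => val (v l) (X l) ≤ val (v l) Y) hi.le ?_
    fun _ _ _ => le_rfl, i, by rwa [exchange_left]⟩
  rw [val_union_sdiff hT hSj]
  linarith

theorem efx_exchange {v : Fin 3 → G → ℝ} {X : Fin 3 → Finset G} {i j : Fin 3} (hij : i ≠ j)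
    (hX : EFX v X) (hle : ∀ l, val (v l) (X l) ≤ val (v l) (exchange X g i j S T l))
    (hgT : NotStronglyEnvied v X (insert g T)) (hv : ∀ l, ∀ x ∈ S ∪ X j \ T, 0 ≤ v l x)
    (hST : ∀ l ≠ j, val (v l) (S ∪ X j \ T) ≤ val (v l) (X l)) :
    EFX v (exchange X g i j S T) := by
  rw [efx_iff_forall_notStronglyEnvied] at hX ⊢
  refine exchange_cases (p := fun _ => NotStronglyEnvied v _) (hgT.mono hle)
    (notStronglyEnvied_of_forall_val_le hv fun l => ?_) fun l _ _ => (hX l).mono hle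
  obtain rfl | hlj := eq_or_ne l j
  · rw [exchange_right hij]
  · exact (hST l hlj).trans (hle l)

end Exchange

theorem efx_and_paretoDominates_exchange {G : Type*} [DecidableEq G] {v : Fin 3 → G → ℝ}
    {X : Fin 3 → Finset G} {g : G} {i j : Fin 3} {S T : Finset G} (hij : i ≠ j)
    (hv : ∀ l, ∀ x ∈ X i ∪ X j, 0 ≤ v l x) (hdisj : Disjoint (X i) (X j)) (hX : EFX v X)
    (hS : S ⊆ X i) (hT : T ⊆ X j) (hi : val (v i) (X i) < val (v i) (insert g T))
    (hgT : NotStronglyEnvied v X (insert g T))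
    (hiST : val (v i) S ≤ val (v i) T) (hjTS : val (v j) T ≤ val (v j) S)
    (hiX : val (v i) (X j) ≤ val (v i) (X i))
    (hST : ∀ l, l ≠ i → l ≠ j → val (v l) (S ∪ X j \ T) ≤ val (v l) (X l)) :
    EFX v (exchange X g i j S T) ∧ ParetoDominates v (exchange X g i j S T) X := by
  have hSj : Disjoint S (X j) := hdisj.mono_left hS
  have hdom := paretoDominates_exchange hSj hT hi hjTS
  refine ⟨efx_exchange hij hX hdom.1 hgT (fun l x hx => hv l x ?_) fun l hlj => ?_, hdom⟩
  · exact union_subset_union hS sdiff_subset hx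
  · obtain rfl | hli := eq_or_ne l i
    · rw [val_union_sdiff hT hSj]
      linarith
    · exact hST l hli hlj

theorem exists_efx_and_paretoDominates_exchange {G : Type*} [DecidableEq G]
    {v : Fin 3 → G → ℝ} {X : Fin 3 → Finset G} {g : G}
    (hv : ∀ l, ∀ x ∈ X 0 ∪ X 1 ∪ {g}, 0 ≤ v l x) (hdisj : Disjoint (X 0) (X 1)) (hEFX : EFX v X)
    (hg0 : g ∉ X 0) (hg1 : g ∉ X 1)
    (hch12 : MostEnvious v X 0 (X 1 ∪ {g})) (hch21 : MostEnvious v X 1 (X 0 ∪ {g}))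
    (hnoself1 : ¬ MostEnvious v X 0 (X 0 ∪ {g})) (hnoself2 : ¬ MostEnvious v X 1 (X 1 ∪ {g}))
    (hne12 : val (v 0) (X 1) ≤ val (v 0) (X 0)) (hne21 : val (v 1) (X 0) ≤ val (v 1) (X 1))
    (hne3 : val (v 2) (X 0) + val (v 2) (X 1) ≤ val (v 2) (X 2) + val (v 2) (X 2)) :
    ∃ i j S T, S ⊆ X i ∧ T ⊆ X j ∧
      EFX v (exchange X g i j S T) ∧ ParetoDominates v (exchange X g i j S T) X := by
  obtain ⟨B₁, hB₁, h0B₁, hgB₁, hself₁⟩ :=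
    hch12.exists_insert_notStronglyEnvied (fun l x hx => hv l x (by grind)) hne12
  obtain ⟨B₀, hB₀, h1B₀, hgB₀, hself₀⟩ :=
    hch21.exists_insert_notStronglyEnvied (fun l x hx => hv l x (by grind)) hne21
  have hB₀g : g ∉ B₀ := fun h => hg0 (hB₀ h)
  have hB₁g : g ∉ B₁ := fun h => hg1 (hB₁ h)
  have h0 : val (v 0) B₀ < val (v 0) B₁ :=
    (val_insert_lt_val_insert hB₀g hB₁g).1 ((hself₀ 0 hnoself1).trans_lt h0B₁)
  have h1 : val (v 1) B₁ < val (v 1) B₀ :=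
    (val_insert_lt_val_insert hB₁g hB₀g).1 ((hself₁ 1 hnoself2).trans_lt h1B₀)
  have hv01 : ∀ l, ∀ x ∈ X 0 ∪ X 1, 0 ≤ v l x := fun l x hx => hv l x (mem_union_left _ hx)
  have hv10 : ∀ l, ∀ x ∈ X 1 ∪ X 0, 0 ≤ v l x := by rwa [union_comm]
  have h2 : val (v 2) (B₀ ∪ X 1 \ B₁) ≤ val (v 2) (X 2) ∨
      val (v 2) (B₁ ∪ X 0 \ B₀) ≤ val (v 2) (X 2) :=
    le_or_le_of_add_le_add
      ((val_union_sdiff_add_val_union_sdiff hB₀ hB₁ hdisj).trans_le hne3)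
  rcases h2 with h2 | h2
  · exact ⟨0, 1, B₀, B₁, hB₀, hB₁, efx_and_paretoDominates_exchange (by decide) hv01 hdisj hEFX
      hB₀ hB₁ h0B₁ hgB₁ h0.le h1.le hne12 (by simpa [Fin.forall_fin_succ] using h2)⟩
  · exact ⟨1, 0, B₁, B₀, hB₁, hB₀, efx_and_paretoDominates_exchange (by decide) hv10 hdisj.symm
      hEFX hB₁ hB₀ h1B₀ hgB₀ h1.le h0.le hne21 (by simpa [Fin.forall_fin_succ] using h2)⟩

theorem two_cycle_gives_dominating_efx_general {G : Type*} [DecidableEq G] (M : Finset G)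
    (v : Fin 3 → G → ℝ) (hv : ∀ i : Fin 3, ∀ g ∈ M, 0 ≤ v i g)
    (X : Fin 3 → Finset G) (hXM : ∀ i, X i ⊆ M)
    (hdisj : ∀ i j, i ≠ j → Disjoint (X i) (X j))
    (hEFX : EFX v X)
    (g : G) (hg : g ∈ M) (hun : g ∉ X 0 ∪ X 1 ∪ X 2)
    (hch12 : MostEnvious v X 0 (X 1 ∪ {g}))
    (hch21 : MostEnvious v X 1 (X 0 ∪ {g}))
    (hnoself1 : ¬ MostEnvious v X 0 (X 0 ∪ {g}))
    (hnoself2 : ¬ MostEnvious v X 1 (X 1 ∪ {g}))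
    (hne12 : val (v 0) (X 1) ≤ val (v 0) (X 0))
    (hne21 : val (v 1) (X 0) ≤ val (v 1) (X 1))
    (hne3 : val (v 2) (X 0) + val (v 2) (X 1) ≤ val (v 2) (X 2) + val (v 2) (X 2)) :
    ∃ Y : Fin 3 → Finset G,
      (∀ i, Y i ⊆ M) ∧
      (∀ i j, i ≠ j → Disjoint (Y i) (Y j)) ∧
      Y 0 ∪ Y 1 ∪ Y 2 ⊆ X 0 ∪ X 1 ∪ X 2 ∪ {g} ∧
      EFX v Y ∧
      ParetoDominates v Y X := by
  have hgX : ∀ l, g ∉ X l := by simpa [Fin.forall_fin_succ] using hun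
  have hv01 : ∀ l, ∀ x ∈ X 0 ∪ X 1 ∪ {g}, 0 ≤ v l x := fun l x hx =>
    hv l x (union_subset (union_subset (hXM 0) (hXM 1)) (singleton_subset_iff.2 hg) hx)
  obtain ⟨i, j, S, T, hS, hT, hY⟩ := exists_efx_and_paretoDominates_exchange hv01
    (hdisj 0 1 (by decide)) hEFX (hgX 0) (hgX 1) hch12 hch21 hnoself1 hnoself2 hne12 hne21
    hne3
  have hXU : ∀ l, X l ⊆ X 0 ∪ X 1 ∪ X 2 ∪ {g} := fun l x hx => by fin_cases l <;> simp_all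
  have hYU := exchange_subset hXU (mem_union_right _ (mem_singleton_self g)) hS hT
  exact ⟨exchange X g i j S T, exchange_subset hXM hg hS hT,
    fun _ _ h => pairwise_disjoint_exchange hdisj hgX hS hT h,
    union_subset (union_subset (hYU 0) (hYU 1)) (hYU 2), hY⟩

/-- Remark 5: if agents 1 and 2 (indices 0 and 1) champion each other, neither
self-champions, they do not envy each other, and agent 3 (index 2) envies neither of them,
then there is a Pareto dominating partial EFX allocation. -/
theorem two_cycle_gives_dominating_efx {G : Type*} [DecidableEq G] (M : Finset G)
    (v : Fin 3 → G → ℝ) (hv : ∀ i : Fin 3, ∀ g ∈ M, 0 ≤ v i g)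
    (hnd : ∀ i : Fin 3, ∀ S ⊆ M, ∀ T ⊆ M, S ≠ T → val (v i) S ≠ val (v i) T)
    (X : Fin 3 → Finset G) (hXM : ∀ i, X i ⊆ M)
    (hdisj : ∀ i j, i ≠ j → Disjoint (X i) (X j))
    (hEFX : EFX v X)
    (g : G) (hg : g ∈ M) (hun : g ∉ X 0 ∪ X 1 ∪ X 2)
    (hch12 : MostEnvious v X 0 (X 1 ∪ {g}))
    (hch21 : MostEnvious v X 1 (X 0 ∪ {g}))
    (hnoself1 : ¬ MostEnvious v X 0 (X 0 ∪ {g}))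
    (hnoself2 : ¬ MostEnvious v X 1 (X 1 ∪ {g}))
    (hne12 : val (v 0) (X 1) ≤ val (v 0) (X 0))
    (hne21 : val (v 1) (X 0) ≤ val (v 1) (X 1))
    (hne31 : val (v 2) (X 0) ≤ val (v 2) (X 2))
    (hne32 : val (v 2) (X 1) ≤ val (v 2) (X 2)) :
    ∃ Y : Fin 3 → Finset G,
      (∀ i, Y i ⊆ M) ∧
      (∀ i j, i ≠ j → Disjoint (Y i) (Y j)) ∧
      Y 0 ∪ Y 1 ∪ Y 2 ⊆ X 0 ∪ X 1 ∪ X 2 ∪ {g} ∧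
      EFX v Y ∧
      (∀ i, val (v i) (X i) ≤ val (v i) (Y i)) ∧
      (∃ i, val (v i) (X i) < val (v i) (Y i)) :=
  two_cycle_gives_dominating_efx_general M v hv X hXM hdisj hEFX g hg hun hch12 hch21 hnoself1
    hnoself2 hne12 hne21 (add_le_add hne31 hne32)
end
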